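/- A Boolean inverse semigroup is simple (has no additive congruences other than equality and the universal congruence) if and only if it is 0-simplifying and fundamental. -/

import Mathlib

/-!
Additive congruences are the congruences, other than the universal one, that respect joins: the
quotient inherits compatible joins because compatible images `θ a`, `θ b` have the same join as
`θ a` and `θ c`, where `c` is the part of `b` orthogonal to `a`.

Two such congruences give one direction. Relating `a` and `b` when `a e a⁻¹ = b e b⁻¹` for all
idempotents `e` gives equality exactly when the semigroup is fundamental; relating them when they
agree up to joins with elements of an additive ideal `I` makes `I` the class of `0`.

Conversely, the kernel of a morphism is an additive ideal. When it is `{0}`, relative complements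
show that the morphism separates idempotents, so elements with the same image conjugate idempotents
in the same way, and fundamentality makes them equal.
-/

namespace Paper

/-- An inverse semigroup with zero: an associative multiplication, a zero that is
absorbing, and a map `⁻¹` sending each element to its unique generalized inverse. -/
class IsInverseSemigroup (S : Type*) [Mul S] [Zero S] [Inv S] : Prop where
  mul_assoc : ∀ a b c : S, a * b * c = a * (b * c)
  mul_inv_mul : ∀ a : S, a * a⁻¹ * a = a
  inv_mul_inv : ∀ a : S, a⁻¹ * a * a⁻¹ = a⁻¹
  inv_unique : ∀ a b : S, a * b * a = a → b * a * b = b → b = a⁻¹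
  zero_mul : ∀ a : S, 0 * a = 0
  mul_zero : ∀ a : S, a * 0 = 0

variable {S : Type*} [Mul S] [Zero S] [Inv S]

/-- The natural partial order: `a ≤ b` iff `a = b * a⁻¹ * a`. -/
def nle (a b : S) : Prop := a = b * a⁻¹ * a

/-- `e` is an idempotent. -/
def idem (e : S) : Prop := e * e = e

/-- `a` and `b` are compatible. -/
def compat (a b : S) : Prop := idem (a⁻¹ * b) ∧ idem (a * b⁻¹)

/-- `a` and `b` are orthogonal. -/
def orth (a b : S) : Prop := a⁻¹ * b = 0 ∧ a * b⁻¹ = 0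

/-- `j` is the least upper bound of `a` and `b` for the natural partial order. -/
def isJoin (a b j : S) : Prop :=
  nle a j ∧ nle b j ∧ ∀ c : S, nle a c → nle b c → nle j c

/-- `m` is the greatest lower bound of `a` and `b` for the natural partial order. -/
def isMeet (a b m : S) : Prop :=
  nle m a ∧ nle m b ∧ ∀ c : S, nle c a → nle c b → nle c m

/-- `a` is an atom: a nonzero element with nothing strictly between it and `0`. -/
def isAtomElem (a : S) : Prop := a ≠ 0 ∧ ∀ x : S, nle x a → x = a ∨ x = 0

/-- `s` is the least upper bound of the finite family `f`. -/
def isJoinFin {m : ℕ} (f : Fin m → S) (s : S) : Prop :=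
  (∀ i, nle (f i) s) ∧ ∀ c : S, (∀ i, nle (f i) c) → nle s c

/-- A Boolean inverse semigroup: a nonzero inverse semigroup with zero in which
compatible pairs have joins, multiplication distributes over binary compatible joins,
and the idempotents form a generalized Boolean algebra under the natural partial
order (meets of idempotents are automatically given by multiplication; the extra
requirement is the existence of relative complements). -/
class IsBooleanInverseSemigroup (S : Type*) [Mul S] [Zero S] [Inv S]
    extends IsInverseSemigroup S : Prop where
  exists_ne_zero : ∃ a : S, a ≠ 0
  compat_join : ∀ a b : S, compat a b → ∃ j, isJoin a b j
  mul_join : ∀ a b j c : S, isJoin a b j → isJoin (c * a) (c * b) (c * j)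
  join_mul : ∀ a b j c : S, isJoin a b j → isJoin (a * c) (b * c) (j * c)
  relcomp : ∀ e f : S, idem e → idem f → nle f e →
    ∃ g : S, idem g ∧ nle g e ∧ g * f = 0 ∧ isJoin f g e


/-- An additive ideal: a nonempty two-sided semigroup ideal closed under binary
compatible joins. -/
def isAdditiveIdeal {S : Type*} [Mul S] [Inv S] (I : Set S) : Prop :=
  I.Nonempty ∧ (∀ a ∈ I, ∀ s : S, s * a ∈ I ∧ a * s ∈ I) ∧
    (∀ a ∈ I, ∀ b ∈ I, compat a b → ∀ j : S, isJoin a b j → j ∈ I)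

/-- `f ≼ e`: there is a pencil `x₁, …, xₘ` from `f` to `e`, i.e.
`f = ⋁ᵢ d(xᵢ)` and `r(xᵢ) ≤ e` for all `i`. -/
def pencilLe {S : Type*} [Mul S] [Inv S] (f e : S) : Prop :=
  ∃ (m : ℕ) (x : Fin (m + 1) → S),
    isJoinFin (fun i => (x i)⁻¹ * x i) f ∧ ∀ i, nle (x i * (x i)⁻¹) e

/-- `S` is `0`-simplifying: it is nonzero and its only additive ideals are `{0}`
and `S`. -/
def isZeroSimplifying (S : Type*) [Mul S] [Zero S] [Inv S] : Prop :=
  (∃ a : S, a ≠ 0) ∧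
    ∀ I : Set S, isAdditiveIdeal I → I = {(0 : S)} ∨ I = Set.univ

/-- `S` is fundamental: every element commuting with all idempotents is idempotent. -/
def isFundamental (S : Type*) [Mul S] : Prop :=
  ∀ a : S, (∀ e : S, idem e → a * e = e * a) → idem a

/-- A morphism (additive homomorphism) of Boolean inverse semigroups: a semigroup
homomorphism preserving `0` and binary compatible joins. -/
def isMorphism {S : Type*} {T : Type*} [Mul S] [Zero S] [Inv S]
    [Mul T] [Zero T] [Inv T] (θ : S → T) : Prop :=
  (∀ a b : S, θ (a * b) = θ a * θ b) ∧ θ 0 = 0 ∧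
    ∀ a b j : S, compat a b → isJoin a b j → isJoin (θ a) (θ b) (θ j)

universe u

/-- `σ` is an additive congruence: the quotient of `S` by `σ` is a Boolean inverse
semigroup with the quotient map a morphism; equivalently, `σ` is the kernel
congruence of some surjective morphism onto a Boolean inverse semigroup. -/
def isAdditiveCongruence {S : Type u} [Mul S] [Zero S] [Inv S]
    (σ : S → S → Prop) : Prop :=
  ∃ (T : Type u) (mT : Mul T) (zT : Zero T) (iT : Inv T),
    @IsBooleanInverseSemigroup T mT zT iT ∧
      ∃ θ : S → T, Function.Surjective θ ∧ (@isMorphism S T _ _ _ mT zT iT θ) ∧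
        ∀ a b : S, σ a b ↔ θ a = θ b

section Order

variable {M : Type*} [Mul M] [Inv M] {a b j c : M}

theorem isJoin.left_nle (h : isJoin a b j) : nle a j :=
  h.1

theorem isJoin.right_nle (h : isJoin a b j) : nle b j :=
  h.2.1

theorem isJoin.nle_of_nle (h : isJoin a b j) (ha : nle a c) (hb : nle b c) : nle j c :=
  h.2.2 c ha hb

end Order

section Semigroup

variable {M : Type*} [Semigroup M]

theorem eq_of_inverses_of_idem_comm (hcomm : ∀ e f : M, idem e → idem f → e * f = f * e)
    {a x y : M} (hax : a * x * a = a) (hxa : x * a * x = x) (hay : a * y * a = a)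
    (hya : y * a * y = y) : x = y := by
  have idem_left {z : M} (hz : a * z * a = a) : idem (a * z) := by
    rw [idem, ← mul_assoc, hz]
  have idem_right {z : M} (hz : z * a * z = z) : idem (z * a) := by
    rw [idem, ← mul_assoc, hz]
  calc
    x = x * ((a * y) * (a * x)) := by rw [← mul_assoc (a * y), hay, ← mul_assoc, hxa]
    _ = x * ((a * x) * (a * y)) := by rw [hcomm _ _ (idem_left hay) (idem_left hax)]
    _ = (x * a) * (y * a) * y := by rw [← mul_assoc (a * x), hax]; simp only [mul_assoc, hya]
    _ = (y * a) * (x * a) * y := by rw [hcomm _ _ (idem_right hxa) (idem_right hya)]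
    _ = y := by rw [mul_assoc y, ← mul_assoc a, hax, hya]

end Semigroup

local instance [IsInverseSemigroup S] : SemigroupWithZero S where
  mul_assoc := IsInverseSemigroup.mul_assoc
  zero_mul := IsInverseSemigroup.zero_mul
  mul_zero := IsInverseSemigroup.mul_zero

local instance [IsInverseSemigroup S] : InvolutiveInv S where
  inv_inv a := (IsInverseSemigroup.inv_unique a⁻¹ a (IsInverseSemigroup.inv_mul_inv a)
    (IsInverseSemigroup.mul_inv_mul a)).symm

section InverseSemigroup

variable [IsInverseSemigroup S]

theorem mul_inv_mul_self (a : S) : a * (a⁻¹ * a) = a := by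
  rw [← mul_assoc, IsInverseSemigroup.mul_inv_mul]

theorem inv_mul_inv_self (a : S) : a⁻¹ * (a * a⁻¹) = a⁻¹ := by
  rw [← mul_assoc, IsInverseSemigroup.inv_mul_inv]

theorem mul_inv_mul_cancel_left (a x : S) : a * (a⁻¹ * (a * x)) = a * x := by
  simp only [← mul_assoc, IsInverseSemigroup.mul_inv_mul]

theorem inv_mul_inv_cancel_left (a x : S) : a⁻¹ * (a * (a⁻¹ * x)) = a⁻¹ * x := by
  simp only [← mul_assoc, IsInverseSemigroup.inv_mul_inv]

theorem eq_zero_of_mul_inv_eq_zero {a : S} (ha : a * a⁻¹ = 0) : a = 0 := by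
  rw [← IsInverseSemigroup.mul_inv_mul a, ha, zero_mul]

theorem idem.mul_mul_self {e : S} (he : idem e) (x : S) : e * (e * x) = e * x := by
  rw [← mul_assoc, he]

theorem idem.inv_eq {e : S} (he : idem e) : e⁻¹ = e :=
  (IsInverseSemigroup.inv_unique e e (by rw [he, he]) (by rw [he, he])).symm

theorem idem_zero : idem (0 : S) :=
  mul_zero 0

theorem idem_inv_mul (a : S) : idem (a⁻¹ * a) := by
  rw [idem, mul_assoc, mul_inv_mul_self]

theorem idem_mul_inv (a : S) : idem (a * a⁻¹) := by
  rw [idem, mul_assoc, inv_mul_inv_self]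

theorem idem.mul {e f : S} (he : idem e) (hf : idem f) : idem (e * f) := by
  have hx := inv_mul_inv_cancel_left (e * f) e
  have hx_eq : f * ((e * f)⁻¹ * e) = (e * f)⁻¹ := by
    apply IsInverseSemigroup.inv_unique
    · have h := mul_inv_mul_self (e * f)
      simp only [mul_assoc] at h ⊢
      rw [hf.mul_mul_self, he.mul_mul_self, h]
    · simp only [mul_assoc] at hx ⊢
      rw [he.mul_mul_self, hf.mul_mul_self, hx]
  have hx_idem : idem (e * f)⁻¹ := by
    rw [idem, ← hx_eq]
    simp only [mul_assoc] at hx ⊢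
    rw [hx]
  have hinv := hx_idem.inv_eq
  rw [inv_inv] at hinv
  rwa [hinv]

theorem idem.comm {e f : S} (he : idem e) (hf : idem f) : e * f = f * e := by
  have hef : e * (f * (e * f)) = e * f := by rw [← mul_assoc, he.mul hf]
  have hfe : f * (e * (f * e)) = f * e := by rw [← mul_assoc, hf.mul he]
  have hinv : f * e = (e * f)⁻¹ := by
    apply IsInverseSemigroup.inv_unique
    · simp only [mul_assoc, hf.mul_mul_self, he.mul_mul_self, hef]
    · simp only [mul_assoc, hf.mul_mul_self, he.mul_mul_self, hfe]
  rw [hinv, (he.mul hf).inv_eq]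

theorem inv_mul_rev (a b : S) : (a * b)⁻¹ = b⁻¹ * a⁻¹ := by
  have hcomm := (idem_inv_mul a).comm (idem_mul_inv b)
  symm
  apply IsInverseSemigroup.inv_unique
  · calc
      a * b * (b⁻¹ * a⁻¹) * (a * b) = a * ((b * b⁻¹) * (a⁻¹ * a)) * b := by simp only [mul_assoc]
      _ = a * b := by
        rw [← hcomm]
        simp only [mul_assoc, mul_inv_mul_cancel_left, mul_inv_mul_self]
  · calc
      b⁻¹ * a⁻¹ * (a * b) * (b⁻¹ * a⁻¹) = b⁻¹ * ((a⁻¹ * a) * (b * b⁻¹)) * a⁻¹ := by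
        simp only [mul_assoc]
      _ = b⁻¹ * a⁻¹ := by
        rw [hcomm]
        simp only [mul_assoc, inv_mul_inv_cancel_left, inv_mul_inv_self]

theorem idem.conj_mul {e : S} (he : idem e) (a : S) : a * e * a⁻¹ * a = a * e := by
  rw [mul_assoc, mul_assoc, he.comm (idem_inv_mul a), mul_assoc, mul_inv_mul_cancel_left]

theorem idem.conj {e : S} (he : idem e) (a : S) : idem (a * e * a⁻¹) := by
  calc
    a * e * a⁻¹ * (a * e * a⁻¹) = (a * e * a⁻¹ * a) * e * a⁻¹ := by simp only [mul_assoc]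
    _ = a * e * a⁻¹ := by rw [he.conj_mul, mul_assoc a, he]

theorem nle_refl (a : S) : nle a a :=
  (IsInverseSemigroup.mul_inv_mul a).symm

theorem zero_nle (a : S) : nle 0 a := by
  rw [nle, mul_zero]

theorem nle.eq_zero {a : S} (h : nle a 0) : a = 0 := by
  rwa [nle, zero_mul, zero_mul] at h

theorem nle_mul_idem (a : S) {e : S} (he : idem e) : nle (a * e) a := by
  calc
    a * e = a * e * a⁻¹ * a * e := by rw [he.conj_mul, mul_assoc, he]
    _ = a * (e * (a⁻¹ * a) * e) := by simp only [mul_assoc]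
    _ = a * (a * e)⁻¹ * (a * e) := by
      rw [inv_mul_rev, he.inv_eq]
      simp only [mul_assoc]

theorem nle_idem_mul (a : S) {e : S} (he : idem e) : nle (e * a) a := by
  have hconj : idem (a⁻¹ * e * a) := by simpa only [inv_inv] using he.conj a⁻¹
  have hea : a * (a⁻¹ * e * a) = e * a := by
    rw [mul_assoc, ← mul_assoc, ← mul_assoc, (idem_mul_inv a).comm he, mul_assoc, mul_assoc,
      mul_inv_mul_self]
  simpa only [hea] using nle_mul_idem a hconj

theorem nle.mul_inv_mul_self_eq {a b : S} (h : nle a b) : b * (a⁻¹ * a) = a := by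
  rw [← mul_assoc, ← h]

theorem nle.inv {a b : S} (h : nle a b) : nle a⁻¹ b⁻¹ := by
  have ha : (a⁻¹ * a) * b⁻¹ = a⁻¹ := by
    rw [← (idem_inv_mul a).inv_eq, ← inv_mul_rev, h.mul_inv_mul_self_eq]
  simpa only [ha] using nle_idem_mul b⁻¹ (idem_inv_mul a)

theorem nle_inv_comm {a b : S} : nle a⁻¹ b ↔ nle a b⁻¹ :=
  ⟨fun h ↦ by simpa only [inv_inv] using h.inv, fun h ↦ by simpa only [inv_inv] using h.inv⟩

theorem nle.mul_inv_self_mul_eq {a b : S} (h : nle a b) : a * a⁻¹ * b = a := by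
  have ha : b⁻¹ * (a * a⁻¹) = a⁻¹ := by simpa only [inv_inv] using h.inv.mul_inv_mul_self_eq
  rw [← inv_inv b, ← (idem_mul_inv a).inv_eq, ← inv_mul_rev, ha, inv_inv]

theorem nle.trans {a b c : S} (hab : nle a b) (hbc : nle b c) : nle a c := by
  have ha : c * (b⁻¹ * b * (a⁻¹ * a)) = a := by
    rw [← mul_assoc, hbc.mul_inv_mul_self_eq, hab.mul_inv_mul_self_eq]
  simpa only [ha] using nle_mul_idem c ((idem_inv_mul b).mul (idem_inv_mul a))

theorem nle.antisymm {a b : S} (hab : nle a b) (hba : nle b a) : a = b := by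
  calc
    a = b * (b⁻¹ * b) * (a⁻¹ * a) := by rw [mul_inv_mul_self, hab.mul_inv_mul_self_eq]
    _ = b * (a⁻¹ * a) * (b⁻¹ * b) := by
      rw [mul_assoc, (idem_inv_mul b).comm (idem_inv_mul a), ← mul_assoc]
    _ = b := by rw [hab.mul_inv_mul_self_eq, hba.mul_inv_mul_self_eq]

theorem nle.mul_left {a b : S} (h : nle a b) (c : S) : nle (c * a) (c * b) := by
  simpa only [mul_assoc c, h.mul_inv_mul_self_eq] using nle_mul_idem (c * b) (idem_inv_mul a)

theorem nle.mul_right {a b : S} (h : nle a b) (c : S) : nle (a * c) (b * c) := by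
  simpa only [← mul_assoc _ b, h.mul_inv_self_mul_eq] using nle_idem_mul (b * c) (idem_mul_inv a)

theorem idem.of_nle {a e : S} (he : idem e) (h : nle a e) : idem a := by
  rw [← h.mul_inv_mul_self_eq]
  exact he.mul (idem_inv_mul a)

theorem nle.mul_inv_mul_eq {a b : S} (h : nle a b) : a * (b⁻¹ * b) = a := by
  conv_lhs => rw [← h.mul_inv_self_mul_eq]
  rw [mul_assoc, mul_inv_mul_self, h.mul_inv_self_mul_eq]

theorem nle.inv_mul_eq {a b : S} (h : nle a b) : b⁻¹ * a = a⁻¹ * a := by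
  calc
    b⁻¹ * a = (b⁻¹ * b) * (a⁻¹ * a) := by rw [mul_assoc, h.mul_inv_mul_self_eq]
    _ = a⁻¹ * (a * (b⁻¹ * b)) := by rw [(idem_inv_mul b).comm (idem_inv_mul a), mul_assoc]
    _ = a⁻¹ * a := by rw [h.mul_inv_mul_eq]

theorem nle.conj_inv_eq {a b e : S} (h : nle a b) (he : idem e) :
    a * e * b⁻¹ = a * e * a⁻¹ := by
  have ha : a⁻¹ * a * b⁻¹ = a⁻¹ := by simpa only [inv_inv] using h.inv.mul_inv_self_mul_eq
  calc
    a * e * b⁻¹ = a * e * a⁻¹ * a * b⁻¹ := by rw [he.conj_mul]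
    _ = a * e * (a⁻¹ * a * b⁻¹) := by simp only [mul_assoc]
    _ = a * e * a⁻¹ := by rw [ha]

theorem idem.mul_eq_of_nle {e f : S} (he : idem e) (h : nle f e) : e * f = f := by
  rw [← h.mul_inv_mul_self_eq, he.mul_mul_self]

theorem compat_of_nle {a b j : S} (ha : nle a j) (hb : nle b j) : compat a b :=
  ⟨(idem_inv_mul j).of_nle ((hb.mul_left a⁻¹).trans (ha.inv.mul_right j)),
    (idem_mul_inv j).of_nle ((hb.inv.mul_left a).trans (ha.mul_right j⁻¹))⟩

theorem orth.compat {a b : S} (h : orth a b) : compat a b :=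
  ⟨h.1 ▸ idem_zero, h.2 ▸ idem_zero⟩

theorem orth_idem_mul_mul_idem {a e f : S} (he : idem e) (hf : idem f)
    (hea : e * (a * a⁻¹) = 0) (hfa : f * (a⁻¹ * a) = 0) (b : S) : orth a (e * (b * f)) := by
  have hae : a⁻¹ * e = 0 := by
    rw [← inv_mul_inv_self a, mul_assoc, ← he.comm (idem_mul_inv a), hea, mul_zero]
  have haf : a * f = 0 := by
    rw [← mul_inv_mul_self a, mul_assoc, ← hf.comm (idem_inv_mul a), hfa, mul_zero]
  constructor
  · rw [← mul_assoc, hae, zero_mul]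
  · rw [inv_mul_rev, inv_mul_rev, hf.inv_eq, mul_assoc, ← mul_assoc, haf, zero_mul]

theorem compat.mul_inv_mul_nle {a b : S} (h : compat a b) : nle (b * (a⁻¹ * a)) a := by
  have hinv : a * b⁻¹ = b * a⁻¹ := by
    rw [← h.2.inv_eq, inv_mul_rev, inv_inv]
  rw [← mul_assoc]
  exact nle_idem_mul a (hinv ▸ h.2)

theorem isJoin.compat {a b j : S} (h : isJoin a b j) : compat a b :=
  compat_of_nle h.left_nle h.right_nle

theorem isJoin.unique {a b j k : S} (hj : isJoin a b j) (hk : isJoin a b k) : j = k :=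
  (hj.nle_of_nle hk.left_nle hk.right_nle).antisymm (hk.nle_of_nle hj.left_nle hj.right_nle)

theorem isJoin_zero_right (a : S) : isJoin a 0 a :=
  ⟨nle_refl a, zero_nle a, fun _ h _ ↦ h⟩

theorem isJoin_zero_left (a : S) : isJoin 0 a a :=
  ⟨zero_nle a, nle_refl a, fun _ _ h ↦ h⟩

theorem isJoin.inv {a b j : S} (h : isJoin a b j) : isJoin a⁻¹ b⁻¹ j⁻¹ :=
  ⟨h.left_nle.inv, h.right_nle.inv, fun _ ha hb ↦
    nle_inv_comm.2 (h.nle_of_nle (nle_inv_comm.1 ha) (nle_inv_comm.1 hb))⟩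

theorem isJoin.of_nle_right {a b c j : S} (h : isJoin a c j) (hcb : nle c b) (hbj : nle b j) :
    isJoin a b j :=
  ⟨h.left_nle, hbj, fun _ ha hb ↦ h.nle_of_nle ha (hcb.trans hb)⟩

theorem isJoin.assoc {a b c ab bc j : S} (hab : isJoin a b ab) (hj : isJoin ab c j)
    (hbc : isJoin b c bc) : isJoin a bc j :=
  ⟨hab.left_nle.trans hj.left_nle, hbc.nle_of_nle (hab.right_nle.trans hj.left_nle) hj.right_nle,
    fun _ ha hd ↦
      hj.nle_of_nle (hab.nle_of_nle ha (hbc.left_nle.trans hd)) (hbc.right_nle.trans hd)⟩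

theorem isJoin.join_join_join_comm {a b c d ab cd ac bd j : S} (hab : isJoin a b ab)
    (hcd : isJoin c d cd) (hj : isJoin ab cd j) (hac : isJoin a c ac) (hbd : isJoin b d bd) :
    isJoin ac bd j :=
  ⟨hac.nle_of_nle (hab.left_nle.trans hj.left_nle) (hcd.left_nle.trans hj.right_nle),
    hbd.nle_of_nle (hab.right_nle.trans hj.left_nle) (hcd.right_nle.trans hj.right_nle),
    fun _ hx hx' ↦
      hj.nle_of_nle (hab.nle_of_nle (hac.left_nle.trans hx) (hbd.left_nle.trans hx'))
        (hcd.nle_of_nle (hac.right_nle.trans hx) (hbd.right_nle.trans hx'))⟩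

end InverseSemigroup

section Image

variable [IsInverseSemigroup S]

-- Lallement's lemma: if `θ a` is idempotent then it is the image of `a * (a * a)⁻¹ * a`.
theorem exists_idem_map_eq {M : Type*} [Mul M] {θ : S → M}
    (hθ : ∀ a b, θ (a * b) = θ a * θ b) {a : S} (ha : idem (θ a)) :
    ∃ e, idem e ∧ θ e = θ a := by
  refine ⟨a * (a * a)⁻¹ * a, ?_, ?_⟩
  · have h := inv_mul_inv_cancel_left (a * a) a
    simp only [mul_assoc] at h
    simp only [idem, mul_assoc, h]
  · have hsq : θ (a * a) = θ a := by rw [hθ, ha]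
    calc
      θ (a * (a * a)⁻¹ * a) = θ (a * a * ((a * a)⁻¹ * (a * a))) := by
        rw [← mul_assoc, hθ, hθ, hθ _ (a * a), hθ (a * a), hsq]
      _ = θ a := by rw [mul_inv_mul_self, hsq]

theorem idem_comm_of_surjective {M : Type*} [Mul M] {θ : S → M}
    (hθ : ∀ a b, θ (a * b) = θ a * θ b) (hsurj : Function.Surjective θ) {p q : M}
    (hp : idem p) (hq : idem q) : p * q = q * p := by
  obtain ⟨a, rfl⟩ := hsurj p
  obtain ⟨b, rfl⟩ := hsurj q
  obtain ⟨e, he, hea⟩ := exists_idem_map_eq hθ hp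
  obtain ⟨f, hf, hfb⟩ := exists_idem_map_eq hθ hq
  rw [← hea, ← hfb, ← hθ, ← hθ, he.comm hf]

end Image

section ConQuotient

variable [IsInverseSemigroup S] (c : Con S)

theorem con_quotient_eq_of_inverses {p x y : c.Quotient} (hpx : p * x * p = p)
    (hxp : x * p * x = x) (hpy : p * y * p = p) (hyp : y * p * y = y) : x = y :=
  eq_of_inverses_of_idem_comm
    (fun _ _ ↦ idem_comm_of_surjective (θ := ((↑) : S → c.Quotient)) (fun _ _ ↦ rfl)
      Quotient.mk_surjective) hpx hxp hpy hyp

theorem con_quotient_mul_inv_mul (a : S) : (a : c.Quotient) * ↑a⁻¹ * ↑a = ↑a :=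
  congrArg _ (IsInverseSemigroup.mul_inv_mul a)

theorem con_quotient_inv_mul_inv (a : S) : ((a⁻¹ : S) : c.Quotient) * ↑a * ↑a⁻¹ = ↑a⁻¹ :=
  congrArg _ (IsInverseSemigroup.inv_mul_inv a)

theorem con_quotient_inv_eq {a b : S} (h : c a b) : ((a⁻¹ : S) : c.Quotient) = ↑b⁻¹ := by
  have hab : (a : c.Quotient) = b := c.eq.2 h
  apply con_quotient_eq_of_inverses c (con_quotient_mul_inv_mul c a) (con_quotient_inv_mul_inv c a)
  · rw [hab, con_quotient_mul_inv_mul]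
  · rw [hab, con_quotient_inv_mul_inv]

instance : Zero c.Quotient where
  zero := ((0 : S) : c.Quotient)

instance : Inv c.Quotient where
  inv q := Con.liftOn q (fun a ↦ ((a⁻¹ : S) : c.Quotient)) fun _ _ h ↦ con_quotient_inv_eq c h

instance : IsInverseSemigroup c.Quotient where
  mul_assoc := mul_assoc
  mul_inv_mul := by
    rintro ⟨a⟩
    exact con_quotient_mul_inv_mul c a
  inv_mul_inv := by
    rintro ⟨a⟩
    exact con_quotient_inv_mul_inv c a
  inv_unique := by
    rintro ⟨a⟩ q haq hqa
    exact con_quotient_eq_of_inverses c haq hqa (con_quotient_mul_inv_mul c a)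
      (con_quotient_inv_mul_inv c a)
  zero_mul := by
    rintro ⟨a⟩
    exact congrArg _ (zero_mul a)
  mul_zero := by
    rintro ⟨a⟩
    exact congrArg _ (mul_zero a)

end ConQuotient

section Boolean

variable [IsBooleanInverseSemigroup S]

theorem isJoin.mul_left {a b j : S} (h : isJoin a b j) (c : S) :
    isJoin (c * a) (c * b) (c * j) :=
  IsBooleanInverseSemigroup.mul_join a b j c h

theorem isJoin.mul_right {a b j : S} (h : isJoin a b j) (c : S) :
    isJoin (a * c) (b * c) (j * c) :=
  IsBooleanInverseSemigroup.join_mul a b j c h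

theorem isJoin.inv_mul_self {a b j : S} (h : isJoin a b j) :
    isJoin (a⁻¹ * a) (b⁻¹ * b) (j⁻¹ * j) := by
  simpa only [h.left_nle.inv_mul_eq, h.right_nle.inv_mul_eq] using h.mul_left j⁻¹

theorem isJoin.conj {a b j e : S} (h : isJoin a b j) (he : idem e) :
    isJoin (a * e * a⁻¹) (b * e * b⁻¹) (j * e * j⁻¹) := by
  simpa only [h.left_nle.conj_inv_eq he, h.right_nle.conj_inv_eq he]
    using (h.mul_right e).mul_right j⁻¹

theorem exists_isJoin_of_nle {a b j : S} (ha : nle a j) (hb : nle b j) : ∃ k, isJoin a b k :=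
  IsBooleanInverseSemigroup.compat_join a b (compat_of_nle ha hb)

theorem exists_isJoin_mul_idem (a : S) {e : S} (he : idem e) :
    ∃ f, idem f ∧ f * e = 0 ∧ isJoin (a * e) (a * f) a := by
  obtain ⟨f, hf, hfa, hfe, hjoin⟩ := IsBooleanInverseSemigroup.relcomp (a⁻¹ * a) (a⁻¹ * a * e)
    (idem_inv_mul a) ((idem_inv_mul a).mul he) (nle_mul_idem _ he)
  refine ⟨f, hf, ?_, ?_⟩
  · rwa [← mul_assoc, hf.comm (idem_inv_mul a), (idem_inv_mul a).mul_eq_of_nle hfa] at hfe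
  · simpa only [mul_assoc, mul_inv_mul_cancel_left, mul_inv_mul_self] using hjoin.mul_left a

theorem exists_isJoin_idem_mul (a : S) {e : S} (he : idem e) :
    ∃ f, idem f ∧ f * e = 0 ∧ isJoin (e * a) (f * a) a := by
  obtain ⟨f, hf, hfe, hjoin⟩ := exists_isJoin_mul_idem a⁻¹ he
  refine ⟨f, hf, hfe, ?_⟩
  simpa only [inv_mul_rev, inv_inv, he.inv_eq, hf.inv_eq] using hjoin.inv

end Boolean

section Morphism

variable {T : Type*} [Mul T] [Zero T] [Inv T] {θ : S → T}

theorem isMorphism.map_mul (hθ : isMorphism θ) (a b : S) : θ (a * b) = θ a * θ b :=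
  hθ.1 a b

theorem isMorphism.map_zero (hθ : isMorphism θ) : θ 0 = 0 :=
  hθ.2.1

theorem isMorphism.map_inv [IsInverseSemigroup S] [IsInverseSemigroup T] (hθ : isMorphism θ)
    (a : S) : θ a⁻¹ = (θ a)⁻¹ := by
  apply IsInverseSemigroup.inv_unique
  · rw [← hθ.map_mul, ← hθ.map_mul, IsInverseSemigroup.mul_inv_mul]
  · rw [← hθ.map_mul, ← hθ.map_mul, IsInverseSemigroup.inv_mul_inv]

theorem isMorphism.map_isJoin [IsInverseSemigroup S] (hθ : isMorphism θ) {a b j : S}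
    (h : isJoin a b j) : isJoin (θ a) (θ b) (θ j) :=
  hθ.2.2 a b j h.compat h

theorem isMorphism.isAdditiveIdeal_ker [IsInverseSemigroup T] (hθ : isMorphism θ) :
    isAdditiveIdeal {a | θ a = 0} := by
  refine ⟨⟨0, hθ.map_zero⟩, fun a (ha : θ a = 0) s ↦ ⟨?_, ?_⟩, ?_⟩
  · rw [Set.mem_ofPred_eq, hθ.map_mul, ha, mul_zero]
  · rw [Set.mem_ofPred_eq, hθ.map_mul, ha, zero_mul]
  · intro a (ha : θ a = 0) b (hb : θ b = 0) hab j hj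
    have h := hθ.2.2 a b j hab hj
    rw [ha, hb] at h
    exact h.unique (isJoin_zero_left 0)

variable [IsBooleanInverseSemigroup S]

theorem isMorphism.idem_injOn (hθ : isMorphism θ) (hker : ∀ a, θ a = 0 → a = 0) :
    Set.InjOn θ {e | idem e} := by
  have mul_eq_self {e f : S} (hf : idem f) (hef : θ e = θ f) : e * f = e := by
    obtain ⟨g, hg, hgf, hjoin⟩ := exists_isJoin_mul_idem e hf
    have heg : e * g = 0 := hker _ <| by
      rw [hθ.map_mul, hef, ← hθ.map_mul, hf.comm hg, hgf, hθ.map_zero]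
    rw [heg] at hjoin
    exact (isJoin_zero_right _).unique hjoin
  intro e he f hf hef
  rw [← mul_eq_self hf hef, he.comm hf, mul_eq_self he hef.symm]

variable [IsInverseSemigroup T]

-- The part of `b` that avoids both the domain and the range of `a` is orthogonal to `a`; what is
-- discarded from `b` is sent below `θ a`.
theorem isMorphism.exists_isJoin_of_compat_map (hθ : isMorphism θ) {a b : S}
    (hab : compat (θ a) (θ b)) :
    ∃ c j, isJoin a c j ∧ nle (θ c) (θ b) ∧ nle (θ b) (θ j) := by
  obtain ⟨f, hf, hfa, hbf⟩ := exists_isJoin_mul_idem b (idem_inv_mul a)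
  obtain ⟨g, hg, hga, hgbf⟩ := exists_isJoin_idem_mul (b * f) (idem_mul_inv a)
  have hf_map : idem (θ f) := by rw [idem, ← hθ.map_mul, hf]
  have hzero : θ (a * a⁻¹ * (b * f)) = 0 := by
    have hcomm : θ (a⁻¹ * b * f) = θ (f * (a⁻¹ * b)) := by
      simp only [hθ.map_mul, hθ.map_inv]
      exact hab.1.comm hf_map
    have hvanish : f * (a⁻¹ * b) = 0 := by
      rw [← inv_mul_inv_cancel_left, ← mul_assoc a⁻¹, ← mul_assoc, hfa, zero_mul]
    rw [mul_assoc, hθ.map_mul, ← mul_assoc a⁻¹, hcomm, hvanish, hθ.map_zero, mul_zero]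
  have hc_map : θ (g * (b * f)) = θ (b * f) := by
    have h := hθ.map_isJoin hgbf
    rw [hzero] at h
    exact (isJoin_zero_left _).unique h
  have horth : orth a (g * (b * f)) := orth_idem_mul_mul_idem hg hf hga hfa b
  obtain ⟨j, hj⟩ := IsBooleanInverseSemigroup.compat_join _ _ horth.compat
  have hj_map := hθ.map_isJoin hj
  have hb_map := hθ.map_isJoin hbf
  rw [← hc_map] at hb_map
  have hba : nle (θ (b * (a⁻¹ * a))) (θ a) := by
    simp only [hθ.map_mul, hθ.map_inv]
    exact hab.mul_inv_mul_nle
  exact ⟨_, j, hj, hb_map.right_nle, hb_map.nle_of_nle (hba.trans hj_map.left_nle) hj_map.right_nle⟩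

theorem isMorphism.isJoin_mul_left_of_surjective (hθ : isMorphism θ)
    (hsurj : Function.Surjective θ) {p q t : T} (h : isJoin p q t) (s : T) :
    isJoin (s * p) (s * q) (s * t) := by
  obtain ⟨a, rfl⟩ := hsurj p
  obtain ⟨b, rfl⟩ := hsurj q
  obtain ⟨d, rfl⟩ := hsurj s
  obtain ⟨c, j, hj, hcb, hbj⟩ := hθ.exists_isJoin_of_compat_map h.compat
  obtain rfl := h.unique ((hθ.map_isJoin hj).of_nle_right hcb hbj)
  have hmul : isJoin (θ d * θ a) (θ d * θ c) (θ d * θ j) := by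
    simpa only [hθ.map_mul] using hθ.map_isJoin (hj.mul_left d)
  exact hmul.of_nle_right (hcb.mul_left _) (hbj.mul_left _)

theorem isMorphism.isBooleanInverseSemigroup (hθ : isMorphism θ) (hsurj : Function.Surjective θ)
    (hne : ∃ t : T, t ≠ 0) : IsBooleanInverseSemigroup T where
  exists_ne_zero := hne
  compat_join p q hpq := by
    obtain ⟨a, rfl⟩ := hsurj p
    obtain ⟨b, rfl⟩ := hsurj q
    obtain ⟨c, j, hj, hcb, hbj⟩ := hθ.exists_isJoin_of_compat_map hpq
    exact ⟨θ j, (hθ.map_isJoin hj).of_nle_right hcb hbj⟩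
  mul_join _ _ _ s h := hθ.isJoin_mul_left_of_surjective hsurj h s
  join_mul _ _ _ s h := by
    simpa only [inv_mul_rev, inv_inv] using
      (hθ.isJoin_mul_left_of_surjective hsurj h.inv s⁻¹).inv
  relcomp p q hp hq hqp := by
    obtain ⟨a, rfl⟩ := hsurj p
    obtain ⟨b, rfl⟩ := hsurj q
    obtain ⟨e, he, hea⟩ := exists_idem_map_eq hθ.map_mul hp
    obtain ⟨f, hf, hfb⟩ := exists_idem_map_eq hθ.map_mul hq
    rw [← hea, ← hfb] at hqp ⊢
    obtain ⟨g, hg, -, hgf, hjoin⟩ := IsBooleanInverseSemigroup.relcomp e (e * f) he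
      (he.mul hf) (nle_mul_idem e hf)
    have hef : θ (e * f) = θ f := by
      rw [hθ.map_mul, (hea ▸ hp : idem (θ e)).mul_eq_of_nle hqp]
    have hjoin_map := hθ.map_isJoin hjoin
    rw [hef] at hjoin_map
    refine ⟨θ g, by rw [idem, ← hθ.map_mul, hg], hjoin_map.right_nle, ?_, hjoin_map⟩
    rw [← hef, ← hθ.map_mul, hgf, hθ.map_zero]

end Morphism

section Simple

/-- A Boolean inverse semigroup is simple if equality and the universal congruence are its only
additive congruences. As `isAdditiveCongruence` asks for a nonzero quotient, the second alternative
is never realised. -/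
def isSimple (S : Type*) [Mul S] [Zero S] [Inv S] : Prop :=
  ∀ σ : S → S → Prop, isAdditiveCongruence σ → (∀ a b, σ a b ↔ a = b) ∨ ∀ a b, σ a b

/-- A semigroup congruence respects joins if the joins of congruent pairs are congruent. -/
def respectsJoins {M : Type*} [Mul M] [Inv M] (c : Con M) : Prop :=
  ∀ ⦃a b j a' b' j' : M⦄, isJoin a b j → isJoin a' b' j' → c a a' → c b b' → c j j'

variable [IsBooleanInverseSemigroup S]

theorem respectsJoins.isMorphism_coe {c : Con S} (hc : respectsJoins c) :
    isMorphism ((↑) : S → c.Quotient) := by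
  have map_nle {a b : S} (h : nle a b) : nle (a : c.Quotient) b := congrArg _ h
  refine ⟨fun _ _ ↦ rfl, rfl, fun a b j _ h ↦ ⟨map_nle h.left_nle, map_nle h.right_nle, ?_⟩⟩
  rintro ⟨d⟩ had hbd
  have hd : isJoin (d * a⁻¹ * a) (d * b⁻¹ * b) (d * j⁻¹ * j) := by
    simpa only [mul_assoc] using h.inv_mul_self.mul_left d
  exact c.eq.2 (hc h hd (c.eq.1 had) (c.eq.1 hbd))

theorem respectsJoins.isAdditiveCongruence {c : Con S} (hc : respectsJoins c) (htop : c ≠ ⊤) :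
    isAdditiveCongruence c := by
  have hne : ∃ q : c.Quotient, q ≠ 0 := by
    by_contra! hzero
    exact htop <| Con.ext fun a b ↦ ⟨fun _ ↦ trivial, fun _ ↦
      c.eq.1 ((hzero a).trans (hzero b).symm)⟩
  exact ⟨c.Quotient, _, _, _,
    hc.isMorphism_coe.isBooleanInverseSemigroup Quotient.mk_surjective hne, (↑),
    Quotient.mk_surjective, hc.isMorphism_coe, fun _ _ ↦ c.eq.symm⟩

theorem isSimple.eq_bot (hS : isSimple S) {c : Con S} (hc : respectsJoins c) (htop : c ≠ ⊤) :
    c = ⊥ := by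
  rcases hS c (hc.isAdditiveCongruence htop) with hbot | huniv
  · exact Con.ext hbot
  · exact absurd (Con.ext fun a b ↦ ⟨fun _ ↦ trivial, fun _ ↦ huniv a b⟩) htop

end Simple

section ConjCon

/-- The largest idempotent-separating congruence: two elements are related when they conjugate every
idempotent in the same way. -/
def conjCon (S : Type*) [Mul S] [Zero S] [Inv S] [IsInverseSemigroup S] : Con S where
  r a b := ∀ e, idem e → a * e * a⁻¹ = b * e * b⁻¹
  iseqv := ⟨fun _ _ _ ↦ rfl, fun h e he ↦ (h e he).symm,
    fun h h' e he ↦ (h e he).trans (h' e he)⟩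
  mul' {a b c d} hab hcd e he := by
    have mul_conj (x y : S) : x * y * e * (x * y)⁻¹ = x * (y * e * y⁻¹) * x⁻¹ := by
      rw [inv_mul_rev]
      simp only [mul_assoc]
    rw [mul_conj, mul_conj, hab _ (he.conj c), hcd e he]

theorem respectsJoins_conjCon [IsBooleanInverseSemigroup S] : respectsJoins (conjCon S) := by
  intro a b j a' b' j' hj hj' haa' hbb' e he
  have h := hj.conj he
  rw [haa' e he, hbb' e he] at h
  exact h.unique (hj'.conj he)

theorem conjCon_ne_top [IsBooleanInverseSemigroup S] : conjCon S ≠ ⊤ := by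
  intro htop
  obtain ⟨a, ha⟩ := IsBooleanInverseSemigroup.exists_ne_zero (S := S)
  have h : conjCon S a 0 := htop ▸ trivial
  have hconj := h _ (idem_inv_mul a)
  rw [mul_inv_mul_self, zero_mul, zero_mul] at hconj
  exact ha (eq_zero_of_mul_inv_eq_zero hconj)

variable [IsInverseSemigroup S]

theorem conjCon_mul_inv_of_commute {a : S} (ha : ∀ e, idem e → a * e = e * a) :
    conjCon S a (a * a⁻¹) := by
  intro e he
  calc
    a * e * a⁻¹ = e * (a * a⁻¹) := by rw [ha e he, mul_assoc]
    _ = a * a⁻¹ * e * (a * a⁻¹)⁻¹ := by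
      rw [(idem_mul_inv a).inv_eq, (idem_mul_inv a).comm he, mul_assoc, idem_mul_inv a]

theorem nle_of_conjCon (hfund : isFundamental S) {a b : S} (h : conjCon S a b) : nle b a := by
  have hconj {e : S} (he : idem e) : a * e * a⁻¹ * b = b * e := by rw [h e he, he.conj_mul]
  have hcomm : ∀ e, idem e → a⁻¹ * b * e = e * (a⁻¹ * b) := by
    intro e he
    calc
      a⁻¹ * b * e = (a⁻¹ * a) * e * (a⁻¹ * b) := by
        rw [mul_assoc, ← hconj he]
        simp only [mul_assoc]
      _ = e * (a⁻¹ * b) := by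
        rw [(idem_inv_mul a).comm he]
        simp only [mul_assoc, inv_mul_inv_cancel_left]
  have hb : a * (a⁻¹ * b) = b := by
    rw [← mul_inv_mul_self b, ← hconj (idem_inv_mul b)]
    simp only [mul_assoc, mul_inv_mul_cancel_left]
  simpa only [hb] using nle_mul_idem a (hfund _ hcomm)

theorem isFundamental_iff_conjCon_eq_bot : isFundamental S ↔ conjCon S = ⊥ := by
  constructor
  · exact fun hfund ↦ Con.ext fun a b ↦
      ⟨fun h ↦ (nle_of_conjCon hfund ((conjCon S).symm h)).antisymm (nle_of_conjCon hfund h),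
        fun h ↦ h ▸ (conjCon S).refl a⟩
  · intro hbot a ha
    have haa : a = a * a⁻¹ := by
      have h := conjCon_mul_inv_of_commute ha
      rwa [hbot] at h
    exact haa ▸ idem_mul_inv a

end ConjCon

section IdealCon

/-- `isCore I c a` says that `a` is the join of `c` with an element of `I`, so that `c` and `a`
agree modulo `I`. -/
def isCore {M : Type*} [Mul M] [Inv M] (I : Set M) (c a : M) : Prop :=
  ∃ x ∈ I, isJoin c x a

theorem isCore.core_nle {M : Type*} [Mul M] [Inv M] {I : Set M} {a c : M} (h : isCore I c a) :
    nle c a :=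
  h.elim fun _ hx ↦ hx.2.left_nle

theorem isAdditiveIdeal.mul_left_mem {M : Type*} [Mul M] [Inv M] {I : Set M}
    (hI : isAdditiveIdeal I) {a : M} (ha : a ∈ I) (s : M) : s * a ∈ I :=
  (hI.2.1 a ha s).1

theorem isAdditiveIdeal.mul_right_mem {M : Type*} [Mul M] [Inv M] {I : Set M}
    (hI : isAdditiveIdeal I) {a : M} (ha : a ∈ I) (s : M) : a * s ∈ I :=
  (hI.2.1 a ha s).2

variable {I : Set S}

theorem isAdditiveIdeal.zero_mem [IsInverseSemigroup S] (hI : isAdditiveIdeal I) : 0 ∈ I := by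
  obtain ⟨a, ha⟩ := hI.1
  simpa only [zero_mul] using hI.mul_left_mem ha 0

theorem isAdditiveIdeal.join_mem [IsInverseSemigroup S] (hI : isAdditiveIdeal I) {a b j : S}
    (ha : a ∈ I) (hb : b ∈ I) (hj : isJoin a b j) : j ∈ I :=
  hI.2.2 a ha b hb hj.compat j hj

theorem isAdditiveIdeal.isCore_refl [IsInverseSemigroup S] (hI : isAdditiveIdeal I) (a : S) :
    isCore I a a :=
  ⟨0, hI.zero_mem, isJoin_zero_right a⟩

variable [IsBooleanInverseSemigroup S]

theorem isCore.mul_left (hI : isAdditiveIdeal I) {a c : S} (h : isCore I c a) (s : S) :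
    isCore I (s * c) (s * a) := by
  obtain ⟨x, hx, hj⟩ := h
  exact ⟨s * x, hI.mul_left_mem hx s, hj.mul_left s⟩

theorem isCore.mul_right (hI : isAdditiveIdeal I) {a c : S} (h : isCore I c a) (s : S) :
    isCore I (c * s) (a * s) := by
  obtain ⟨x, hx, hj⟩ := h
  exact ⟨x * s, hI.mul_right_mem hx s, hj.mul_right s⟩

theorem isCore.trans (hI : isAdditiveIdeal I) {a b c : S} (hab : isCore I a b)
    (hbc : isCore I b c) : isCore I a c := by
  obtain ⟨x, hx, hax⟩ := hab
  obtain ⟨y, hy, hby⟩ := hbc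
  obtain ⟨w, hw⟩ := exists_isJoin_of_nle (hax.right_nle.trans hby.left_nle) hby.right_nle
  exact ⟨w, hI.join_mem hx hy hw, hax.assoc hby hw⟩

theorem isCore.restrict (hI : isAdditiveIdeal I) {a b c : S} (hc : nle c b) (ha : isCore I a b) :
    isCore I (c * (a⁻¹ * a)) c := by
  obtain ⟨x, hx, hj⟩ := ha
  have h := hj.inv_mul_self.mul_left c
  rw [hc.mul_inv_mul_eq] at h
  exact ⟨c * (x⁻¹ * x), hI.mul_left_mem (hI.mul_left_mem hx _) _, h⟩

theorem exists_isCore_of_isCore (hI : isAdditiveIdeal I) {a b c : S} (ha : isCore I a c)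
    (hb : isCore I b c) : ∃ d, isCore I d a ∧ isCore I d b := by
  have hmeet : a * (b⁻¹ * b) = b * (a⁻¹ * a) := by
    calc
      a * (b⁻¹ * b) = c * (a⁻¹ * a) * (b⁻¹ * b) := by rw [ha.core_nle.mul_inv_mul_self_eq]
      _ = c * (b⁻¹ * b) * (a⁻¹ * a) := by
        rw [mul_assoc, (idem_inv_mul a).comm (idem_inv_mul b), ← mul_assoc]
      _ = b * (a⁻¹ * a) := by rw [hb.core_nle.mul_inv_mul_self_eq]
  exact ⟨a * (b⁻¹ * b), hb.restrict hI ha.core_nle, hmeet ▸ ha.restrict hI hb.core_nle⟩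

theorem isCore.join (hI : isAdditiveIdeal I) {a b c d j k : S} (hca : isCore I c a)
    (hdb : isCore I d b) (hj : isJoin a b j) (hk : isJoin c d k) : isCore I k j := by
  obtain ⟨x, hx, hcx⟩ := hca
  obtain ⟨y, hy, hdy⟩ := hdb
  obtain ⟨w, hw⟩ := exists_isJoin_of_nle (hcx.right_nle.trans hj.left_nle)
    (hdy.right_nle.trans hj.right_nle)
  exact ⟨w, hI.join_mem hx hy hw, hcx.join_join_join_comm hdy hj hk hw⟩

/-- The congruence of an additive ideal `I`: two elements are related when they agree up to
joining with elements of `I`. -/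
def idealCon (hI : isAdditiveIdeal I) : Con S where
  r a b := ∃ c, isCore I c a ∧ isCore I c b
  iseqv := by
    refine ⟨fun a ↦ ⟨a, hI.isCore_refl a, hI.isCore_refl a⟩, fun ⟨c, ha, hb⟩ ↦ ⟨c, hb, ha⟩, ?_⟩
    rintro a b d ⟨c, hca, hcb⟩ ⟨c', hcb', hcd'⟩
    obtain ⟨m, hmc, hmc'⟩ := exists_isCore_of_isCore hI hcb hcb'
    exact ⟨m, hmc.trans hI hca, hmc'.trans hI hcd'⟩
  mul' := by
    rintro a b a' b' ⟨c, hca, hcb⟩ ⟨c', hca', hcb'⟩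
    exact ⟨c * c', (hca'.mul_left hI c).trans hI (hca.mul_right hI a'),
      (hcb'.mul_left hI c).trans hI (hcb.mul_right hI b')⟩

theorem idealCon_zero_iff (hI : isAdditiveIdeal I) {a : S} : idealCon hI a 0 ↔ a ∈ I := by
  constructor
  · rintro ⟨c, ⟨x, hx, hcx⟩, y, -, hcy⟩
    rw [hcy.left_nle.eq_zero] at hcx
    rwa [hcx.unique (isJoin_zero_left x)]
  · exact fun ha ↦ ⟨0, ⟨a, ha, isJoin_zero_left a⟩, hI.isCore_refl 0⟩

theorem respectsJoins_idealCon (hI : isAdditiveIdeal I) : respectsJoins (idealCon hI) := by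
  rintro a b j a' b' j' hj hj' ⟨c, hca, hca'⟩ ⟨d, hdb, hdb'⟩
  obtain ⟨k, hk⟩ := exists_isJoin_of_nle (hca.core_nle.trans hj.left_nle)
    (hdb.core_nle.trans hj.right_nle)
  exact ⟨k, hca.join hI hdb hj hk, hca'.join hI hdb' hj' hk⟩

end IdealCon

section Main

variable [IsBooleanInverseSemigroup S]

theorem isSimple.isFundamental (hS : isSimple S) : isFundamental S :=
  isFundamental_iff_conjCon_eq_bot.2 (hS.eq_bot respectsJoins_conjCon conjCon_ne_top)

theorem isSimple.isZeroSimplifying (hS : isSimple S) : isZeroSimplifying S := by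
  refine ⟨IsBooleanInverseSemigroup.exists_ne_zero, fun I hI ↦ ?_⟩
  by_cases htop : idealCon hI = ⊤
  · right
    exact Set.eq_univ_of_forall fun a ↦ (idealCon_zero_iff hI).1 (htop ▸ trivial)
  · left
    have hbot := hS.eq_bot (respectsJoins_idealCon hI) htop
    ext a
    rw [← idealCon_zero_iff hI, hbot]
    rfl

theorem isMorphism.injective_of_isFundamental {T : Type*} [Mul T] [Zero T] [Inv T]
    [IsInverseSemigroup T] {θ : S → T} (hθ : isMorphism θ) (hfund : isFundamental S)
    (hker : ∀ a, θ a = 0 → a = 0) : Function.Injective θ := by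
  intro a b hab
  have hconj : conjCon S a b := fun e he ↦
    hθ.idem_injOn hker (he.conj a) (he.conj b) <| by simp only [hθ.map_mul, hθ.map_inv, hab]
  rwa [isFundamental_iff_conjCon_eq_bot.1 hfund] at hconj

end Main

/-- A Boolean inverse semigroup is simple (its only additive congruences are
equality and the universal congruence) iff it is `0`-simplifying and fundamental. -/
theorem simple_iff_zeroSimplifying_and_fundamental (S : Type u)
    [Mul S] [Zero S] [Inv S] [IsBooleanInverseSemigroup S] :
    (∀ σ : S → S → Prop, isAdditiveCongruence σ →
        (∀ a b : S, σ a b ↔ a = b) ∨ (∀ a b : S, σ a b)) ↔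
      (isZeroSimplifying S ∧ isFundamental S) := by
  constructor
  · intro (hS : isSimple S)
    exact ⟨hS.isZeroSimplifying, hS.isFundamental⟩
  · rintro ⟨hzero, hfund⟩ σ ⟨T, _, _, _, _, θ, -, hθ, hσ⟩
    rcases hzero.2 _ hθ.isAdditiveIdeal_ker with hker | hker
    · have hinj : Function.Injective θ :=
        hθ.injective_of_isFundamental hfund fun a ha ↦ hker.subset ha
      exact .inl fun a b ↦ (hσ a b).trans hinj.eq_iff
    · have hθ_zero (a : S) : θ a = 0 := hker.superset (Set.mem_univ a)
      exact .inr fun a b ↦ (hσ a b).2 ((hθ_zero a).trans (hθ_zero b).symm)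

end Paper
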